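/- arXiv:1602.02451 — 3 statements merged into one kernel-verified Lean document; each statement's English description precedes it below -/
import Mathlib

section
/- Let φ ∈ C¹(ℝ⁺ × [0,T)) be a solution of the flow-map equation with admissible data (φ₀, g) such that φ₀ ≡ ε₀ is a positive constant, g' ≤ 0 on ℝ⁺, and inf_{(x,t) ∈ ℝ⁺×[0,T']} φ(x,t) > 0 for every T' < T. If lim_{t→T} φ(0,t) > 0, then the solution can be continued past T: there exist δ > 0 and a solution φ̃ ∈ C¹(ℝ⁺ × [0,T+δ]) of the flow-map equation with the same data which agrees with φ on ℝ⁺ × [0,T) and satisfies inf_{(x,t) ∈ ℝ⁺×[0,T+δ]} φ̃(x,t) > 0. -/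
/-!
Write `u = log φ`. Then `∂ₜu(x, t) = ∫_x^∞ g'/Φ`, and since `g'(0) = 0` one can write
`g'(z) = z k(z)` with `k` continuous (`exists_kernel`), while `Φ(z)` is `z` times the mean of `φ`
over `[0, z]`. The integrand is thus `k` divided by that mean, without singularity at `0`, and it
vanishes beyond some `a`, where `φ` keeps its initial value. So `u` solves an autonomous ordinary
differential equation in the Banach space `C([0, a])`. Replacing `exp` by a truncation `trunc`
outside `[l, A]` makes the vector field bounded and globally Lipschitz (`field_bounds`), so the
truncated equation has a solution `w` on `[0, T + 1]` (`exists_flow`).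

The sign `g' ≤ 0` and the constant initial datum give the a priori bounds `L ≤ φ ≤ ε₀` on `[0, T)`,
with `L = lim φ(0, t) > 0` (`apriori`). With `l = log L - 1` and `A = log ε₀ + 1` the truncation is
inactive along `log φ`, so `w = log φ` before `T` by uniqueness (`flow_unique`); by sup-norm
continuity of `w` at `T` it remains inactive up to `T + δ`, and `exp w` is the continuation there.
Joint `C¹` regularity follows by writing `w` as a double primitive of a continuous function
(`flow_regular`, `double_primitive`).
-/

open Set MeasureTheory Filter Topology

noncomputable def gD (g : ℝ → ℝ) (z : ℝ) : ℝ := derivWithin g (Set.Ici 0) z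

noncomputable def Phi (φ : ℝ → ℝ → ℝ) (z t : ℝ) : ℝ := ∫ σ in (0:ℝ)..z, φ σ t

/-- Admissible data for the flow-map equation: `φ₀ ∈ C¹(ℝ⁺)`, `g ∈ C²(ℝ⁺)` with
compact support in `ℝ⁺`, `inf φ₀ > 0` and `g'(0) = 0`. -/
def AdmissibleData (φ₀ g : ℝ → ℝ) : Prop :=
  ContDiffOn ℝ 1 φ₀ (Set.Ici 0) ∧
  ContDiffOn ℝ 2 g (Set.Ici 0) ∧
  (∃ a : ℝ, ∀ z ≥ a, g z = 0) ∧
  (∃ m : ℝ, 0 < m ∧ ∀ x ≥ (0:ℝ), m ≤ φ₀ x) ∧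
  gD g 0 = 0

/-- `φ` is a `C¹(ℝ⁺ × I)` solution of the flow-map equation
`∂ₜφ(x,t) = φ(x,t) ∫_x^∞ g'(z)/Φ(z,t) dz`, `φ(x,0) = φ₀(x)`. -/
def IsFlowMapSolution (φ₀ g : ℝ → ℝ) (φ : ℝ → ℝ → ℝ) (I : Set ℝ) : Prop :=
  ContDiffOn ℝ 1 (fun p : ℝ × ℝ => φ p.1 p.2) (Set.Ici 0 ×ˢ I) ∧
  (∀ x ≥ (0:ℝ), φ x 0 = φ₀ x) ∧
  (∀ x ≥ (0:ℝ), ∀ t ∈ I,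
    HasDerivWithinAt (fun s => φ x s)
      (φ x t * ∫ z in Set.Ioi x, gD g z / Phi φ z t) I t)

/-- `inf_{(x,t) ∈ ℝ⁺ × I} φ(x,t) > 0`. -/
def PosInfOn (φ : ℝ → ℝ → ℝ) (I : Set ℝ) : Prop :=
  ∃ m : ℝ, 0 < m ∧ ∀ x ≥ (0:ℝ), ∀ t ∈ I, m ≤ φ x t

/-! ### Averages over `[0, z]` -/

/-- The mean of `f` over `[0, z]`, rescaled to the unit interval so that it is also defined (and
continuous) at `z = 0`, where it equals `f 0`. -/
noncomputable def avg (f : ℝ → ℝ) (z : ℝ) : ℝ := ∫ θ in (0:ℝ)..1, f (z * θ)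

theorem avg_mul (f : ℝ → ℝ) (z : ℝ) : z * avg f z = ∫ y in (0:ℝ)..z, f y := by
  unfold avg
  rw [intervalIntegral.mul_integral_comp_mul_left]; simp

theorem continuous_avg {X : Type*} [TopologicalSpace X] {f : X → ℝ → ℝ}
    (hf : Continuous fun p : X × ℝ => f p.1 p.2) :
    Continuous fun p : X × ℝ => avg (f p.1) p.2 := by
  unfold avg
  refine intervalIntegral.continuous_parametric_intervalIntegral_of_continuous'
    (f := fun (p : X × ℝ) θ => f p.1 (p.2 * θ)) ?_ 0 1
  exact hf.comp (f := fun q : (X × ℝ) × ℝ => (q.1.1, q.1.2 * q.2)) (by fun_prop)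

theorem le_avg {f : ℝ → ℝ} (hf : Continuous f) {m : ℝ} (hm : ∀ y, m ≤ f y) (z : ℝ) :
    m ≤ avg f z := by
  have h := intervalIntegral.integral_mono_on (a := 0) (b := 1) (μ := volume) zero_le_one
    (f := fun _ => m) (g := fun θ => f (z * θ)) (by simp)
    ((by fun_prop : Continuous fun θ => f (z * θ)).intervalIntegrable _ _) (fun θ _ => hm _)
  simpa [avg] using h

theorem avg_pos {f : ℝ → ℝ} (hf : Continuous f) (hm : ∀ y, 0 < f y) (z : ℝ) :
    0 < avg f z :=
  intervalIntegral.intervalIntegral_pos_of_pos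
    ((by fun_prop : Continuous fun θ => f (z * θ)).intervalIntegrable _ _) (fun _ => hm _)
    zero_lt_one

theorem abs_avg_sub_le {f h : ℝ → ℝ} (hf : Continuous f) (hh : Continuous h) {C : ℝ}
    (hC : ∀ y, |f y - h y| ≤ C) (z : ℝ) : |avg f z - avg h z| ≤ C := by
  unfold avg
  rw [← intervalIntegral.integral_sub
    ((by fun_prop : Continuous fun θ => f (z * θ)).intervalIntegrable _ _)
    ((by fun_prop : Continuous fun θ => h (z * θ)).intervalIntegrable _ _)]
  have := intervalIntegral.norm_integral_le_of_norm_le_const (a := 0) (b := 1)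
    (f := fun θ => f (z * θ) - h (z * θ)) (C := C) (fun θ _ => hC _)
  simpa using this

/-! ### Removing the singularity at `z = 0` -/

/-- Since `g'(0) = 0`, one has `g'(z) = z k(z)` with `k` the mean of `g''` over `[0, z]`; in
particular `k` is continuous up to `0`, and it inherits the bounded support of `g'`. -/
theorem exists_kernel {g : ℝ → ℝ} (hg : ContDiffOn ℝ 2 g (Ici 0)) (ha : ∃ a : ℝ, ∀ z ≥ a, g z = 0)
    (h0 : gD g 0 = 0) :
    ∃ a : ℝ, 0 < a ∧ ∃ k : ℝ → ℝ, Continuous k ∧ (∀ z ≥ (0:ℝ), gD g z = z * k z) ∧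
      ∀ z ≥ a, k z = 0 := by
  obtain ⟨a, ha⟩ := ha
  have hg1 : ContDiffOn ℝ 1 (gD g) (Ici 0) :=
    hg.derivWithin (uniqueDiffOn_Ici 0) (by norm_num)
  have hc2 : ContinuousOn (derivWithin (gD g) (Ici 0)) (Ici 0) :=
    hg1.continuousOn_derivWithin (uniqueDiffOn_Ici 0) (by norm_num)
  set q : ℝ → ℝ := fun y => derivWithin (gD g) (Ici 0) (max y 0) with hq
  have hqc : Continuous q := hc2.comp_continuous (by fun_prop) (fun y => mem_Ici.2 (le_max_right _ _))
  have key : ∀ z ≥ (0:ℝ), gD g z = z * avg q z := by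
    intro z hz
    rw [avg_mul]
    have : ∫ y in (0:ℝ)..z, q y = gD g z - gD g 0 := by
      apply intervalIntegral.integral_eq_sub_of_hasDeriv_right_of_le hz
        (hg1.continuousOn.mono Icc_subset_Ici_self) _ (hqc.intervalIntegrable _ _)
      intro x hx
      have hx0 : max x 0 = x := max_eq_left hx.1.le
      have := (hg1.differentiableOn (by norm_num) x hx.1.le).hasDerivWithinAt
      simp only [hq, hx0]
      exact this.mono (Ioi_subset_Ici hx.1.le)
    rw [this, h0, sub_zero]
  -- beyond this point `g` vanishes on a full neighbourhood, so its derivative does too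
  refine ⟨max a 0 + 1, by positivity, avg q, ?_, key, ?_⟩
  · exact (continuous_avg (X := Unit) (f := fun _ => q) (by fun_prop)).comp
      (f := fun z => ((), z)) (by fun_prop)
  · intro z hz
    have hz0 : 0 < z := lt_of_lt_of_le (by positivity) hz
    have hza : a < z := by linarith [le_max_left a 0]
    have : gD g z = 0 := by
      have he : g =ᶠ[𝓝[Ici 0] z] fun _ => (0:ℝ) := by
        filter_upwards [mem_nhdsWithin_of_mem_nhds (Ioi_mem_nhds hza)] with y hy
        exact ha y (le_of_lt hy)
      rw [gD, he.derivWithin_eq (ha z hza.le)]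
      simp
    have h2 := key z hz0.le
    rw [this] at h2
    rcases mul_eq_zero.1 h2.symm with h | h
    · exact absurd h hz0.ne'
    · exact h

/-- The factor `z` of `g'(z) = z k(z)` cancels against that of `Φ(z) = z * avg f z`: the integrand
`g'/Φ` is a continuous function on `(0, a]` and vanishes beyond `a`. The profile `h` is only
prescribed on the half-line, where it agrees with `f`. -/
theorem velocity_facts {g k : ℝ → ℝ} {a : ℝ} (hk : Continuous k)
    (hgk : ∀ z ≥ (0:ℝ), gD g z = z * k z) (hka : ∀ z ≥ a, k z = 0)
    {f h : ℝ → ℝ} (hf : Continuous f) (hpos : ∀ y, 0 < f y) (hfh : ∀ y ≥ (0:ℝ), h y = f y) :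
    IntegrableOn (fun z => gD g z / ∫ σ in (0:ℝ)..z, h σ) (Ioi 0) ∧
    (∀ x, 0 ≤ x → ∫ z in Ioi x, gD g z / ∫ σ in (0:ℝ)..z, h σ
      = ∫ z in x..a, k z / avg f z) ∧
    (∀ x, 0 ≤ x → a ≤ x → ∫ z in Ioi x, gD g z / ∫ σ in (0:ℝ)..z, h σ = 0) := by
  have hpt : ∀ z, 0 < z → (gD g z / ∫ σ in (0:ℝ)..z, h σ) = k z / avg f z := by
    intro z hz
    have : ∫ σ in (0:ℝ)..z, h σ = z * avg f z := by
      rw [avg_mul]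
      apply intervalIntegral.integral_congr
      intro y hy
      rw [uIcc_of_le hz.le] at hy
      exact hfh y hy.1
    rw [this, hgk z hz.le, mul_div_mul_left _ _ hz.ne']
  have hav : Continuous (avg f) :=
    (continuous_avg (X := Unit) (f := fun _ => f) (by fun_prop)).comp
      (f := fun z => ((), z)) (by fun_prop)
  have hqc : Continuous fun z => k z / avg f z :=
    hk.div hav (fun z => (avg_pos hf hpos z).ne')
  have hzero : ∀ z, 0 < z → a ≤ z → (gD g z / ∫ σ in (0:ℝ)..z, h σ) = 0 := by
    intro z hz hza
    rw [hpt z hz, hka z hza, zero_div]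
  have hI : ∀ x, 0 ≤ x → ∫ z in Ioi x, gD g z / ∫ σ in (0:ℝ)..z, h σ
      = ∫ z in Ioc x a, k z / avg f z := by
    intro x hx
    rw [← setIntegral_congr_fun measurableSet_Ioc
      (fun z hz => hpt z (lt_of_le_of_lt hx hz.1))]
    apply setIntegral_eq_of_subset_of_forall_sdiff_eq_zero measurableSet_Ioi
      Ioc_subset_Ioi_self
    rintro z ⟨hz, hz'⟩
    apply hzero z (lt_of_le_of_lt hx hz)
    by_contra hlt
    exact hz' ⟨hz, (not_le.1 hlt).le⟩
  refine ⟨?_, fun x hx => ?_, fun x hx hxa => ?_⟩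
  · have h1 : IntegrableOn (fun z => gD g z / ∫ σ in (0:ℝ)..z, h σ) (Ioc 0 a) :=
      (integrableOn_congr_fun (fun z hz => hpt z hz.1) measurableSet_Ioc).2
        (hqc.integrableOn_Icc.mono_set Ioc_subset_Icc_self)
    refine h1.of_forall_sdiff_eq_zero measurableSet_Ioi ?_
    rintro z ⟨hz, hz'⟩
    apply hzero z hz
    by_contra hlt
    exact hz' ⟨hz, (not_le.1 hlt).le⟩
  · rcases le_total x a with hxa | hxa
    · rw [hI x hx, intervalIntegral.integral_of_le hxa]
    · rw [hI x hx, Ioc_eq_empty (not_lt.2 hxa), Measure.restrict_empty, integral_zero_measure]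
      symm
      refine intervalIntegral.integral_zero_ae (Eventually.of_forall fun z hz => ?_)
      rw [uIoc_of_ge hxa] at hz
      rw [hka z hz.1.le, zero_div]
  · rw [hI x hx, Ioc_eq_empty (not_lt.2 hxa)]; simp

/-! ### Smoothness of double primitives -/

/-- A double primitive of a continuous function is `C¹`: both partial derivatives exist (the one in
`x` by Fubini) and are jointly continuous. -/
theorem double_primitive {H : ℝ → ℝ → ℝ} (hH : Continuous fun p : ℝ × ℝ => H p.1 p.2) (a : ℝ) :
    ContDiff ℝ 1 (fun p : ℝ × ℝ => ∫ s in (0:ℝ)..p.2, ∫ z in p.1..a, H z s) ∧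
    ∀ x t, HasDerivAt (fun r => ∫ s in (0:ℝ)..r, ∫ z in x..a, H z s) (∫ z in x..a, H z t) t := by
  have hin : Continuous fun p : ℝ × ℝ => ∫ z in p.1..a, H z p.2 := by
    have := intervalIntegral.continuous_parametric_intervalIntegral_of_continuous (μ := volume)
      (f := fun (p : ℝ × ℝ) z => H z p.2) (a₀ := a) (s := fun p => p.1)
      (hH.comp (f := fun q : (ℝ × ℝ) × ℝ => (q.2, q.1.2)) (by fun_prop)) (by fun_prop)
    simpa only [intervalIntegral.integral_symm a] using! this.neg
  have hin2 : Continuous fun p : ℝ × ℝ => ∫ s in (0:ℝ)..p.2, H p.1 s :=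
    intervalIntegral.continuous_parametric_intervalIntegral_of_continuous (μ := volume)
      (f := fun (p : ℝ × ℝ) s => H p.1 s) (a₀ := 0) (s := fun p => p.2)
      (hH.comp (f := fun q : (ℝ × ℝ) × ℝ => (q.1.1, q.2)) (by fun_prop)) (by fun_prop)
  have ht : ∀ x t, HasDerivAt (fun r => ∫ s in (0:ℝ)..r, ∫ z in x..a, H z s)
      (∫ z in x..a, H z t) t := by
    intro x t
    have hc : Continuous fun s => ∫ z in x..a, H z s :=
      hin.comp (f := fun s => (x, s)) (by fun_prop)
    exact (hc.integral_hasStrictDerivAt 0 t).hasDerivAt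
  have hx : ∀ x t, HasDerivAt (fun y => ∫ s in (0:ℝ)..t, ∫ z in y..a, H z s)
      (-∫ s in (0:ℝ)..t, H x s) x := by
    intro x t
    have hsw : (fun y => ∫ s in (0:ℝ)..t, ∫ z in y..a, H z s)
        = fun y => -∫ z in a..y, ∫ s in (0:ℝ)..t, H z s := by
      funext y
      rw [MeasureTheory.intervalIntegral_intervalIntegral_swap,
        intervalIntegral.integral_symm a y]
      exact ((hH.comp continuous_swap).continuousOn.integrableOn_compact
        (isCompact_uIcc.prod isCompact_uIcc)).mono_set
        (prod_mono uIoc_subset_uIcc uIoc_subset_uIcc)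
    rw [hsw]
    have hc : Continuous fun z => ∫ s in (0:ℝ)..t, H z s :=
      hin2.comp (f := fun z => (z, t)) (by fun_prop)
    exact (hc.integral_hasStrictDerivAt a x).hasDerivAt.neg
  refine ⟨?_, ht⟩
  set W : ℝ → ℝ → ℝ := fun x t => ∫ s in (0:ℝ)..t, ∫ z in x..a, H z s with hW
  set W₁ : ℝ → ℝ → ℝ →L[ℝ] ℝ :=
    fun x t => ContinuousLinearMap.toSpanSingleton ℝ (-∫ s in (0:ℝ)..t, H x s) with hW₁
  set W₂ : ℝ → ℝ → ℝ →L[ℝ] ℝ :=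
    fun x t => ContinuousLinearMap.toSpanSingleton ℝ (∫ z in x..a, H z t) with hW₂
  have hspan : Continuous fun c : ℝ => ContinuousLinearMap.toSpanSingleton ℝ c :=
    (ContinuousLinearMap.toSpanSingletonCLE (𝕜 := ℝ) (E := ℝ)).continuous
  have c1 : Continuous fun p : ℝ × ℝ => W₁ p.1 p.2 := hspan.comp hin2.neg
  have c2 : Continuous fun p : ℝ × ℝ => W₂ p.1 p.2 := hspan.comp hin
  have hF : ∀ p : ℝ × ℝ, HasFDerivAt (fun p : ℝ × ℝ => W p.1 p.2)
      ((W₁ p.1 p.2).coprod (W₂ p.1 p.2)) p := fun p =>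
    (hasStrictFDerivAt_uncurry_coprod (𝕜 := ℝ) (f := W) (f₁ := W₁) (f₂ := W₂) (u := p)
      (Eventually.of_forall fun v => (hx v.1 v.2).hasFDerivAt)
      (Eventually.of_forall fun v => (ht v.1 v.2).hasFDerivAt)
      c1.continuousAt c2.continuousAt).hasFDerivAt
  rw [contDiff_one_iff_hasFDerivAt]
  refine ⟨_, ?_, hF⟩
  fun_prop

/-! ### The truncated flow in `C([0, a])` -/

/-- The exponential of `s` clamped to `[l, A]` (for `l ≤ A`): a bounded, globally Lipschitz
substitute for `exp` that is bounded below by `exp l`. -/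
noncomputable def trunc (l A s : ℝ) : ℝ := Real.exp (max l (min A s))

theorem continuous_trunc (l A : ℝ) : Continuous (trunc l A) := by
  unfold trunc; fun_prop

theorem le_trunc (l A s : ℝ) : Real.exp l ≤ trunc l A s :=
  Real.exp_le_exp.2 (le_max_left _ _)

theorem trunc_of_mem {l A s : ℝ} (hl : l ≤ s) (hA : s ≤ A) : trunc l A s = Real.exp s := by
  rw [trunc, min_eq_right hA, max_eq_right hl]

theorem abs_trunc_sub_le {l A : ℝ} (hlA : l ≤ A) (s t : ℝ) :
    |trunc l A s - trunc l A t| ≤ Real.exp A * |s - t| := by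
  have h1 : ∀ x ∈ Iic A, ∀ y ∈ Iic A, |Real.exp y - Real.exp x| ≤ Real.exp A * |y - x| := by
    intro x hx y hy
    refine (convex_Iic A).norm_image_sub_le_of_norm_deriv_le (f := Real.exp)
      (fun z _ => Real.differentiable_exp z) (fun z hz => ?_) hx hy
    rw [Real.deriv_exp, Real.norm_eq_abs, Real.abs_exp]
    exact Real.exp_le_exp.2 hz
  have hm : ∀ r, max l (min A r) ∈ Iic A := fun r => max_le hlA (min_le_left _ _)
  refine (h1 _ (hm t) _ (hm s)).trans (mul_le_mul_of_nonneg_left ?_ (Real.exp_pos A).le)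
  calc |max l (min A s) - max l (min A t)| ≤ max |l - l| |min A s - min A t| :=
        abs_max_sub_max_le_max _ _ _ _
    _ = |min A s - min A t| := by simp
    _ ≤ max |A - A| |s - t| := abs_min_sub_min_le_max _ _ _ _
    _ = |s - t| := by simp

/-- Extension of a function on `[0, a]` to `ℝ` by its boundary values. -/
noncomputable def clampExt {a : ℝ} (ha : 0 ≤ a) (u : C(Icc 0 a, ℝ)) (y : ℝ) : ℝ := u (projIcc 0 a ha y)

/-- The truncated profile `φ` associated with `u = log φ` on `[0, a]`, extended constantly. -/
noncomputable def profile {a : ℝ} (ha : 0 ≤ a) (l A : ℝ) (u : C(Icc 0 a, ℝ)) (y : ℝ) : ℝ :=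
  trunc l A (clampExt ha u y)

/-- The integrand `g'/Φ` written as `k / avg`, for the truncated profile of `u`. -/
noncomputable def dens {a : ℝ} (ha : 0 ≤ a) (l A : ℝ) (k : ℝ → ℝ) (u : C(Icc 0 a, ℝ)) (z : ℝ) : ℝ :=
  k z / avg (profile ha l A u) z

section
variable {a : ℝ} (ha : 0 ≤ a) (l A : ℝ)

theorem continuous_profile_uncurry :
    Continuous fun p : C(Icc 0 a, ℝ) × ℝ => profile ha l A p.1 p.2 := by
  have h : Continuous fun p : C(Icc 0 a, ℝ) × ℝ => p.1 (projIcc 0 a ha p.2) := by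
    have := continuous_projIcc (a := (0:ℝ)) (b := a) (h := ha)
    fun_prop
  exact (continuous_trunc l A).comp h

theorem continuous_profile (u : C(Icc 0 a, ℝ)) : Continuous (profile ha l A u) :=
  (continuous_profile_uncurry ha l A).comp (f := fun y => (u, y)) (by fun_prop)

theorem exp_le_avg_profile (u : C(Icc 0 a, ℝ)) (z : ℝ) :
    Real.exp l ≤ avg (profile ha l A u) z :=
  le_avg (continuous_profile ha l A u) (fun _ => le_trunc _ _ _) z

theorem avg_profile_pos (u : C(Icc 0 a, ℝ)) (z : ℝ) : 0 < avg (profile ha l A u) z :=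
  (Real.exp_pos l).trans_le (exp_le_avg_profile ha l A u z)

theorem continuous_dens_uncurry {k : ℝ → ℝ} (hk : Continuous k) :
    Continuous fun p : C(Icc 0 a, ℝ) × ℝ => dens ha l A k p.1 p.2 :=
  (hk.comp continuous_snd).div (continuous_avg (continuous_profile_uncurry ha l A))
    (fun p => (avg_profile_pos ha l A p.1 p.2).ne')

theorem continuous_dens {k : ℝ → ℝ} (hk : Continuous k) (u : C(Icc 0 a, ℝ)) :
    Continuous (dens ha l A k u) :=
  (continuous_dens_uncurry ha l A hk).comp (f := fun y => (u, y)) (by fun_prop)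

/-- The vector field on `C([0, a])` governing `u = log φ` for the truncated problem:
`x ↦ ∫_x^a g'/Φ`. -/
noncomputable def field {k : ℝ → ℝ} (hk : Continuous k) (u : C(Icc 0 a, ℝ)) : C(Icc 0 a, ℝ) where
  toFun x := ∫ z in (x : ℝ)..a, dens ha l A k u z
  continuous_toFun := by
    have h := intervalIntegral.continuous_primitive
      (fun b c => (continuous_dens ha l A hk u).intervalIntegrable (μ := volume) b c) a
    have h2 := (h.comp (continuous_subtype_val (p := (· ∈ Icc 0 a)))).neg
    simpa only [Function.comp_def, intervalIntegral.integral_symm a] using! h2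

theorem abs_integral_le {q : ℝ → ℝ} {C : ℝ} (hC : 0 ≤ C) (hq : ∀ z ∈ Icc 0 a, |q z| ≤ C)
    (x : Icc 0 a) : |∫ z in (x : ℝ)..a, q z| ≤ C * a := by
  have h := intervalIntegral.norm_integral_le_of_norm_le_const (a := (x : ℝ)) (b := a) (f := q)
    (C := C) (fun z hz => by
      rw [uIoc_of_le x.2.2] at hz
      exact hq z ⟨x.2.1.trans hz.1.le, hz.2⟩)
  rw [Real.norm_eq_abs] at h
  refine h.trans (mul_le_mul_of_nonneg_left ?_ hC)
  rw [abs_of_nonneg (sub_nonneg.2 x.2.2)]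
  linarith [x.2.1]

theorem field_bounds (hlA : l ≤ A) {k : ℝ → ℝ} (hk : Continuous k) :
    (∃ B : NNReal, ∀ u, ‖field ha l A hk u‖ ≤ B) ∧ ∃ K : NNReal, LipschitzWith K (field ha l A hk) := by
  obtain ⟨C, hC⟩ := isCompact_Icc.exists_bound_of_continuousOn (s := Icc 0 a) hk.continuousOn
  have hC0 : 0 ≤ C := (norm_nonneg _).trans (hC 0 ⟨le_rfl, ha⟩)
  set m := Real.exp l with hm
  have hm0 : 0 < m := Real.exp_pos l
  constructor
  · refine ⟨⟨C / m * a, by positivity⟩, fun u => ?_⟩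
    refine (ContinuousMap.norm_le _ (NNReal.coe_nonneg _)).2 fun x => ?_
    refine abs_integral_le (by positivity) (fun z hz => ?_) x
    rw [dens, abs_div, abs_of_pos (avg_profile_pos ha l A u z)]
    exact div_le_div₀ hC0 (hC z hz) hm0 (exp_le_avg_profile ha l A u z)
  · refine ⟨⟨C * Real.exp A / m ^ 2 * a, by positivity⟩, LipschitzWith.of_dist_le_mul fun u v => ?_⟩
    rw [dist_eq_norm, dist_eq_norm]
    refine (ContinuousMap.norm_le _ (mul_nonneg (NNReal.coe_nonneg _) (norm_nonneg _))).2 fun x => ?_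
    have e : (field ha l A hk u - field ha l A hk v) x
        = ∫ z in (x : ℝ)..a, (dens ha l A k u z - dens ha l A k v z) := by
      rw [intervalIntegral.integral_sub ((continuous_dens ha l A hk u).intervalIntegrable _ _)
        ((continuous_dens ha l A hk v).intervalIntegrable _ _)]
      rfl
    rw [e, Real.norm_eq_abs]
    have h := abs_integral_le (a := a) (q := fun z => dens ha l A k u z - dens ha l A k v z)
      (C := C * (Real.exp A * ‖u - v‖) / m ^ 2) (by positivity) (fun z hz => ?_) x
    · refine h.trans (le_of_eq ?_)
      change _ = C * Real.exp A / m ^ 2 * a * ‖u - v‖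
      ring
    · have h1 := avg_profile_pos ha l A u z
      have h2 := avg_profile_pos ha l A v z
      have h3 : |avg (profile ha l A v) z - avg (profile ha l A u) z| ≤ Real.exp A * ‖u - v‖ := by
        refine abs_avg_sub_le (continuous_profile ha l A v) (continuous_profile ha l A u)
          (fun y => ?_) z
        refine (abs_trunc_sub_le hlA _ _).trans (mul_le_mul_of_nonneg_left ?_ (Real.exp_pos A).le)
        rw [abs_sub_comm]
        exact (u - v).norm_coe_le_norm (projIcc 0 a ha y)
      have h4 : dens ha l A k u z - dens ha l A k v z
          = k z * (avg (profile ha l A v) z - avg (profile ha l A u) z)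
            / (avg (profile ha l A u) z * avg (profile ha l A v) z) := by
        rw [dens, dens]
        field_simp
      simp only [h4]
      rw [abs_div, abs_mul, abs_of_pos (mul_pos h1 h2), pow_two]
      refine div_le_div₀ (by positivity) (mul_le_mul (hC z hz) h3 (abs_nonneg _) hC0)
        (by positivity) ?_
      exact mul_le_mul (exp_le_avg_profile ha l A u z) (exp_le_avg_profile ha l A v z) hm0.le h1.le

/-- Boundedness and the global Lipschitz property give a solution on any prescribed time interval. -/
theorem exists_flow (hlA : l ≤ A) {k : ℝ → ℝ} (hk : Continuous k) {S : ℝ} (hS : 0 ≤ S)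
    (u₀ : C(Icc 0 a, ℝ)) :
    ∃ w : ℝ → C(Icc 0 a, ℝ), w 0 = u₀ ∧
      ∀ t ∈ Icc 0 S, HasDerivWithinAt w (field ha l A hk (w t)) (Icc 0 S) t := by
  obtain ⟨⟨B, hB⟩, K, hK⟩ := field_bounds ha l A hlA hk
  have hP : IsPicardLindelof (fun _ : ℝ => field ha l A hk) (tmin := 0) (tmax := S)
      ⟨0, le_rfl, hS⟩ u₀ (B * ⟨S, hS⟩) 0 B K :=
    { lipschitzOnWith := fun t _ => hK.lipschitzOnWith
      continuousOn := fun x _ => continuousOn_const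
      norm_le := fun t _ x _ => hB x
      mul_max_le := by
        have : max (S - 0) ((0:ℝ) - 0) = S := by simp [hS]
        rw [this]
        simp only [NNReal.coe_zero, sub_zero]
        exact le_rfl }
  exact hP.exists_eq_forall_mem_Icc_hasDerivWithinAt₀

/-- Uniqueness for the truncated flow among sup-norm continuous curves `u` that solve the equation
only pointwise in `x`: such a curve coincides with `u(0) + ∫ field (u s) ds`, hence is
differentiable in the sup norm. -/
theorem flow_unique (hlA : l ≤ A) {k : ℝ → ℝ} (hk : Continuous k) {S S' : ℝ} (hSS : S' ≤ S)
    {w u : ℝ → C(Icc 0 a, ℝ)}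
    (hw : ∀ t ∈ Icc 0 S, HasDerivWithinAt w (field ha l A hk (w t)) (Icc 0 S) t)
    (hu : Continuous u) (h0 : w 0 = u 0)
    (hud : ∀ x, ∀ t ∈ Ico 0 S', HasDerivWithinAt (fun s => u s x) (field ha l A hk (u t) x) (Ici t) t) :
    ∀ t ∈ Icc 0 S', w t = u t := by
  obtain ⟨-, K, hK⟩ := field_bounds ha l A hlA hk
  have hc : Continuous fun s => field ha l A hk (u s) := hK.continuous.comp hu
  set v : ℝ → C(Icc 0 a, ℝ) := fun t => u 0 + ∫ s in (0:ℝ)..t, field ha l A hk (u s) with hv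
  have hvd : ∀ t, HasDerivAt v (field ha l A hk (u t)) t := fun t =>
    (hc.integral_hasStrictDerivAt 0 t).hasDerivAt.const_add (u 0)
  have huv : ∀ t ∈ Icc 0 S', u t = v t := by
    intro t ht
    ext x
    have hvx : ∀ t, HasDerivAt (fun s => v s x) (field ha l A hk (u t) x) t := fun t =>
      ((ContinuousMap.evalCLM ℝ x : C(Icc 0 a, ℝ) →L[ℝ] ℝ).hasFDerivAt).comp_hasDerivAt t (hvd t)
    refine eq_of_has_deriv_right_eq (hud x) (fun t _ => (hvx t).hasDerivWithinAt)
      (by fun_prop) (fun t _ => (hvx t).continuousAt.continuousWithinAt) ?_ t ht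
    simp [hv]
  refine ODE_solution_unique_of_mem_Icc_right (v := fun _ => field ha l A hk) (K := K)
    (s := fun _ => univ)
    (fun t _ => hK.lipschitzOnWith)
    (fun t ht => ((hw t ⟨ht.1, ht.2.trans hSS⟩).continuousWithinAt.mono (Icc_subset_Icc_right hSS)))
    (fun t ht => (hw t ⟨ht.1, ht.2.le.trans hSS⟩).mono_of_mem_nhdsWithin
      (Icc_mem_nhdsGE_of_mem ⟨ht.1, ht.2.trans_le hSS⟩))
    (fun _ _ => mem_univ _) hu.continuousOn (fun t ht => ?_) (fun _ _ => mem_univ _) h0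
  refine ((hvd t).hasDerivWithinAt.congr_of_eventuallyEq ?_ (huv t ⟨ht.1, ht.2.le⟩))
  filter_upwards [Icc_mem_nhdsGE_of_mem ht] with s hs
  exact huv s hs

/-- A trajectory of the truncated flow starting from a constant is the restriction of a function
that is `C¹` on the whole plane, namely the double primitive of the density along it. Past `a` this
function stays equal to the initial constant. -/
theorem flow_regular {k : ℝ → ℝ} (hk : Continuous k) (hka : ∀ z ≥ a, k z = 0) {S c : ℝ} (hS : 0 ≤ S)
    {w : ℝ → C(Icc 0 a, ℝ)} (h0 : w 0 = ContinuousMap.const _ c)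
    (hw : ∀ t ∈ Icc 0 S, HasDerivWithinAt w (field ha l A hk (w t)) (Icc 0 S) t) :
    ∃ W : ℝ → ℝ → ℝ, ContDiff ℝ 1 (fun p : ℝ × ℝ => W p.1 p.2) ∧
      (∀ x, W x 0 = c) ∧
      (∀ x, ∀ t ∈ Icc 0 S, HasDerivAt (W x) (∫ z in x..a, dens ha l A k (w t) z) t) ∧
      ∀ x ≥ (0:ℝ), ∀ t ∈ Icc 0 S, W x t = clampExt ha (w t) x := by
  have hwc : ContinuousOn w (Icc 0 S) := fun t ht => (hw t ht).continuousWithinAt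
  -- freezing time outside `[0, S]` makes the density continuous on the whole plane
  set H : ℝ → ℝ → ℝ := fun z s => dens ha l A k (w (projIcc 0 S hS s)) z with hHdef
  have hwp : Continuous fun s : ℝ => w (projIcc 0 S hS s) :=
    hwc.comp_continuous (by fun_prop) (fun s => (projIcc 0 S hS s).2)
  have hH : Continuous fun p : ℝ × ℝ => H p.1 p.2 :=
    (continuous_dens_uncurry ha l A hk).comp
      (f := fun p : ℝ × ℝ => (w (projIcc 0 S hS p.2), p.1))
      ((hwp.comp continuous_snd).prodMk continuous_fst)
  obtain ⟨h1, h2⟩ := double_primitive hH a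
  have hd : ∀ x, ∀ t ∈ Icc 0 S, HasDerivAt (fun r => c + ∫ s in (0:ℝ)..r, ∫ z in x..a, H z s)
      (∫ z in x..a, dens ha l A k (w t) z) t := by
    intro x t ht
    have := (h2 x t).const_add c
    simpa only [hHdef, projIcc_of_mem hS ht] using this
  have hin : ∀ x ∈ Icc 0 a, ∀ t ∈ Icc 0 S,
      (c + ∫ s in (0:ℝ)..t, ∫ z in x..a, H z s) = clampExt ha (w t) x := by
    intro x hx
    have hwx : ∀ t ∈ Icc 0 S, HasDerivWithinAt (fun s => clampExt ha (w s) x)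
        (∫ z in x..a, dens ha l A k (w t) z) (Icc 0 S) t := by
      intro t ht
      have := ((ContinuousMap.evalCLM ℝ (projIcc 0 a ha x) : C(Icc 0 a, ℝ) →L[ℝ] ℝ).hasFDerivAt).comp_hasDerivWithinAt t (hw t ht)
      rw [projIcc_of_mem ha hx] at this
      simp only [clampExt, projIcc_of_mem ha hx]
      exact this
    refine eq_of_has_deriv_right_eq (fun t ht => (hd x t ⟨ht.1, ht.2.le⟩).hasDerivWithinAt)
      (fun t ht => (hwx t ⟨ht.1, ht.2.le⟩).mono_of_mem_nhdsWithin (Icc_mem_nhdsGE_of_mem ht))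
      (fun t ht => (hd x t ht).continuousAt.continuousWithinAt)
      (fun t ht => (hwx t ht).continuousWithinAt) ?_
    simp [clampExt, h0]
  have hout : ∀ x ≥ a, ∀ t ∈ Icc 0 S, (c + ∫ s in (0:ℝ)..t, ∫ z in x..a, H z s) = c := by
    intro x hx t ht
    have hz : ∀ s, ∫ z in x..a, H z s = 0 := by
      intro s
      refine intervalIntegral.integral_zero_ae (Eventually.of_forall fun z hz => ?_)
      rw [uIoc_of_ge hx] at hz
      simp only [hHdef, dens, hka z hz.1.le, zero_div]
    simp [hz]
  refine ⟨fun x t => c + ∫ s in (0:ℝ)..t, ∫ z in x..a, H z s, contDiff_const.add h1,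
    by simp, hd, ?_⟩
  intro x hx t ht
  rcases le_total x a with hxa | hxa
  · exact hin x ⟨hx, hxa⟩ t ht
  · have e : clampExt ha (w t) x = clampExt ha (w t) a := by
      rw [clampExt, clampExt, projIcc_of_right_le ha hxa, projIcc_right]
    rw [e, ← hin a ⟨ha, le_rfl⟩ t ht]
    exact (hout x hxa t ht).trans (hout a le_rfl t ht).symm

end

/-! ### A priori bounds and continuation -/

/-- As `g' ≤ 0`, each `φ(x, ·)` decreases and, for constant initial data, `φ(·, t)` is smallest at
`x = 0`; hence `L ≤ φ(0, t) ≤ φ(x, t) ≤ ε₀`. -/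
theorem apriori {ε₀ T a L : ℝ} {g k : ℝ → ℝ} {φ : ℝ → ℝ → ℝ} (hε₀ : 0 < ε₀)
    (hg' : ∀ z ≥ (0:ℝ), gD g z ≤ 0)
    (hk : Continuous k) (hgk : ∀ z ≥ (0:ℝ), gD g z = z * k z) (hka : ∀ z ≥ a, k z = 0)
    (hsol : IsFlowMapSolution (fun _ => ε₀) g φ (Ico 0 T))
    (hinf : ∀ T' < T, PosInfOn φ (Icc 0 T'))
    (hL : Tendsto (fun t => φ 0 t) (𝓝[<] T) (𝓝 L)) :
    ∀ t ∈ Ico 0 T, ∀ x ≥ (0:ℝ), 0 < φ x t ∧ L ≤ φ x t ∧ φ x t ≤ ε₀ ∧ (a ≤ x → φ x t = ε₀) ∧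
      HasDerivWithinAt (fun s => Real.log (φ x s)) (∫ z in Ioi x, gD g z / Phi φ z t) (Ico 0 T) t := by
  obtain ⟨hC, hinit, hder⟩ := hsol
  have hpos : ∀ t ∈ Ico 0 T, ∀ x ≥ (0:ℝ), 0 < φ x t := by
    intro t ht x hx
    obtain ⟨m, hm, h⟩ := hinf t ht.2
    exact hm.trans_le (h x hx t ⟨ht.1, le_rfl⟩)
  have hlog : ∀ t ∈ Ico 0 T, ∀ x ≥ (0:ℝ),
      HasDerivWithinAt (fun s => Real.log (φ x s)) (∫ z in Ioi x, gD g z / Phi φ z t) (Ico 0 T) t := by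
    intro t ht x hx
    have h := (hder x hx t ht).log (hpos t ht x hx).ne'
    rwa [mul_div_cancel_left₀ _ (hpos t ht x hx).ne'] at h
  have hfacts : ∀ t ∈ Ico 0 T, IntegrableOn (fun z => gD g z / Phi φ z t) (Ioi 0) ∧
      ∀ x, 0 ≤ x → a ≤ x → ∫ z in Ioi x, gD g z / Phi φ z t = 0 := by
    intro t ht
    have hf : Continuous fun y : ℝ => φ (max y 0) t :=
      hC.continuousOn.comp_continuous (f := fun y : ℝ => (max y 0, t)) (by fun_prop)
        (fun y => ⟨mem_Ici.2 (le_max_right _ _), ht⟩)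
    obtain ⟨h1, -, h3⟩ := velocity_facts (g := g) (h := fun y => φ y t) hk hgk hka hf
      (fun y => hpos t ht _ (le_max_right _ _)) (fun y hy => by simp only [max_eq_left hy])
    exact ⟨h1, h3⟩
  have hneg : ∀ t ∈ Ico 0 T, ∀ z ∈ Ioi (0:ℝ), gD g z / Phi φ z t ≤ 0 := by
    intro t ht z hz
    refine div_nonpos_of_nonpos_of_nonneg (hg' z (le_of_lt hz)) ?_
    exact intervalIntegral.integral_nonneg (le_of_lt hz) (fun y hy => (hpos t ht y hy.1).le)
  -- every `log φ(x, ·)` decreases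
  have hanti : ∀ x ≥ (0:ℝ), AntitoneOn (fun s => Real.log (φ x s)) (Ico 0 T) := by
    intro x hx
    refine antitoneOn_of_hasDerivWithinAt_nonpos (convex_Ico 0 T)
      (fun t ht => (hlog t ht x hx).continuousWithinAt)
      (fun t ht => (hlog t (interior_subset ht) x hx).mono interior_subset) (fun t ht => ?_)
    exact setIntegral_nonpos measurableSet_Ioi
      (fun z hz => hneg t (interior_subset ht) z (lt_of_le_of_lt hx hz))
  -- the velocity integral is smallest at `x = 0`, so `log φ(x, ·) - log φ(0, ·)` increases
  have hdiff : ∀ x ≥ (0:ℝ),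
      MonotoneOn (fun s => Real.log (φ x s) - Real.log (φ 0 s)) (Ico 0 T) := by
    intro x hx
    refine monotoneOn_of_hasDerivWithinAt_nonneg (convex_Ico 0 T)
      (fun t ht => ((hlog t ht x hx).sub (hlog t ht 0 le_rfl)).continuousWithinAt)
      (fun t ht => ((hlog t (interior_subset ht) x hx).sub
        (hlog t (interior_subset ht) 0 le_rfl)).mono interior_subset) (fun t ht => ?_)
    have ht' := interior_subset ht
    have h := setIntegral_mono_set (μ := volume) (s := Ioi x) (t := Ioi 0)
      (f := fun z => -(gD g z / Phi φ z t)) (hfacts t ht').1.neg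
      ((ae_restrict_iff' measurableSet_Ioi).2 (Eventually.of_forall fun z hz => by
        have := hneg t ht' z hz
        simpa using this)) (Ioi_subset_Ioi hx).eventuallyLE
    rw [integral_neg, integral_neg] at h
    linarith
  intro t ht x hx
  have h00 : (0:ℝ) ∈ Ico 0 T := ⟨le_rfl, ht.1.trans_lt ht.2⟩
  have hge : φ 0 t ≤ φ x t := by
    have := hdiff x hx h00 ht ht.1
    simp only [hinit x hx, hinit 0 le_rfl, sub_self] at this
    exact (Real.log_le_log_iff (hpos t ht 0 le_rfl) (hpos t ht x hx)).1 (by linarith)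
  refine ⟨hpos t ht x hx, ?_, ?_, fun hax => ?_, hlog t ht x hx⟩
  · refine le_trans ?_ hge
    refine le_of_tendsto hL ?_
    filter_upwards [Ioo_mem_nhdsLT ht.2] with s hs
    have hs' : s ∈ Ico 0 T := ⟨ht.1.trans hs.1.le, hs.2⟩
    exact (Real.log_le_log_iff (hpos s hs' 0 le_rfl) (hpos t ht 0 le_rfl)).1
      (hanti 0 le_rfl ht hs' hs.1.le)
  · have := hanti x hx h00 ht ht.1
    simp only [hinit x hx] at this
    exact (Real.log_le_log_iff (hpos t ht x hx) hε₀).1 this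
  · have h := constant_of_has_deriv_right_zero (f := fun s => φ x s) (a := 0) (b := t)
      (fun s hs => ((hder x hx s ⟨hs.1, hs.2.trans_lt ht.2⟩).continuousWithinAt.mono
        (fun r hr => ⟨hr.1, hr.2.trans_lt ht.2⟩)))
      (fun s hs => by
        have hs' : s ∈ Ico 0 T := ⟨hs.1, hs.2.trans ht.2⟩
        have := hder x hx s hs'
        rw [(hfacts s hs').2 x hx hax, mul_zero] at this
        exact this.mono_of_mem_nhdsWithin (Ico_mem_nhdsGE_of_mem hs'))
      t ⟨ht.1, le_rfl⟩
    rw [h, hinit x hx]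

/-- continuation criterion, from Lemma `lemma_cont`: a solution on `[0,T)`
with constant data `φ₀ ≡ ε₀ > 0`, `g' ≤ 0`, positive infimum on every `[0,T']`, `T' < T`,
and `lim_{t→T} φ(0,t) > 0` can be continued to `[0, T+δ]` for some `δ > 0`. -/
theorem statement7 (ε₀ T : ℝ) (g : ℝ → ℝ) (φ : ℝ → ℝ → ℝ)
    (hε₀ : 0 < ε₀) (hT : 0 < T)
    (hadm : AdmissibleData (fun _ => ε₀) g)
    (hg' : ∀ z ≥ (0:ℝ), gD g z ≤ 0)
    (hsol : IsFlowMapSolution (fun _ => ε₀) g φ (Set.Ico 0 T))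
    (hinf : ∀ T' < T, PosInfOn φ (Set.Icc 0 T'))
    (hlim : ∃ L : ℝ, 0 < L ∧ Tendsto (fun t => φ 0 t) (𝓝[<] T) (𝓝 L)) :
    ∃ δ : ℝ, 0 < δ ∧ ∃ ψ : ℝ → ℝ → ℝ,
      IsFlowMapSolution (fun _ => ε₀) g ψ (Set.Icc 0 (T + δ)) ∧
      (∀ x ≥ (0:ℝ), ∀ t ∈ Set.Ico (0:ℝ) T, ψ x t = φ x t) ∧
      PosInfOn ψ (Set.Icc 0 (T + δ)) := by
  obtain ⟨L, hL0, hL⟩ := hlim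
  obtain ⟨-, hg2, hsupp, -, hg0⟩ := hadm
  obtain ⟨a, ha0, k, hk, hgk, hka⟩ := exists_kernel hg2 hsupp hg0
  have ha : 0 ≤ a := ha0.le
  have hap := apriori hε₀ hg' hk hgk hka hsol hinf hL
  obtain ⟨hC, hinit, hder⟩ := hsol
  have h0T : (0:ℝ) ∈ Ico 0 T := ⟨le_rfl, hT⟩
  have hLε : Real.log L ≤ Real.log ε₀ :=
    Real.log_le_log hL0 ((hap 0 h0T 0 le_rfl).2.1.trans (hap 0 h0T 0 le_rfl).2.2.1)
  have hlogφ : ∀ t ∈ Ico 0 T, ∀ x ≥ (0:ℝ),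
      Real.log L ≤ Real.log (φ x t) ∧ Real.log (φ x t) ≤ Real.log ε₀ := fun t ht x hx =>
    ⟨Real.log_le_log hL0 (hap t ht x hx).2.1,
      Real.log_le_log (hap t ht x hx).1 (hap t ht x hx).2.2.1⟩
  -- a unit margin around the a priori range `[log L, log ε₀]` of `log φ`
  set l := Real.log L - 1 with hl
  set A := Real.log ε₀ + 1 with hA
  have hlA : l ≤ A := by linarith
  have hS : 0 ≤ T + 1 := by linarith
  obtain ⟨w, hw0, hw⟩ := exists_flow ha l A hlA hk hS (ContinuousMap.const _ (Real.log ε₀))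
  obtain ⟨W, hWC, hW0, hWd, hWw⟩ := flow_regular ha l A hk hka hS hw0 hw
  -- the truncated flow coincides with `log φ` before time `T`
  have hwφ : ∀ t ∈ Ico 0 T, ∀ x : Icc 0 a, w t x = Real.log (φ x t) := by
    intro t ht
    have hp : ∀ s : ℝ, (projIcc 0 t ht.1 s : ℝ) ∈ Ico 0 T := fun s =>
      ⟨(projIcc 0 t ht.1 s).2.1, (projIcc 0 t ht.1 s).2.2.trans_lt ht.2⟩
    have hcont : Continuous fun p : ℝ × Icc 0 a =>
        Real.log (φ p.2 (projIcc 0 t ht.1 p.1 : ℝ)) := by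
      refine Continuous.log ?_ (fun p => (hap _ (hp p.1) p.2 p.2.2.1).1.ne')
      refine hC.continuousOn.comp_continuous
        (f := fun p : ℝ × Icc 0 a => ((p.2 : ℝ), (projIcc 0 t ht.1 p.1 : ℝ))) ?_
        (fun p => ⟨p.2.2.1, hp p.1⟩)
      exact (continuous_subtype_val.comp continuous_snd).prodMk
        (continuous_subtype_val.comp (continuous_projIcc.comp continuous_fst))
    let u : ℝ → C(Icc 0 a, ℝ) := fun s =>
      ⟨fun x => Real.log (φ x (projIcc 0 t ht.1 s : ℝ)),
        hcont.comp (f := fun x : Icc 0 a => (s, x)) (by fun_prop)⟩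
    have hu : Continuous u := ContinuousMap.continuous_of_continuous_uncurry u hcont
    have hux : ∀ s ∈ Icc 0 t, ∀ x : Icc 0 a, u s x = Real.log (φ x s) := by
      intro s hs x
      change Real.log (φ x (projIcc 0 t ht.1 s : ℝ)) = _
      rw [projIcc_of_mem ht.1 hs]
    have hfin := flow_unique ha l A hlA hk (S := T + 1) (S' := t) (by linarith [ht.2]) hw hu
      (by
        ext x
        rw [hux 0 ⟨le_rfl, ht.1⟩, hinit x x.2.1, hw0]; rfl)
      (by
        intro x s hs
        have hsT : s ∈ Ico 0 T := ⟨hs.1, hs.2.trans ht.2⟩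
        have hprof : ∀ y ≥ (0:ℝ), φ y s = profile ha l A (u s) y := by
          intro y hy
          have hb := hlogφ s hsT
          rw [profile, clampExt, hux s ⟨hs.1, hs.2.le⟩,
            trunc_of_mem (by linarith [(hb _ (projIcc 0 a ha y).2.1).1])
              (by linarith [(hb _ (projIcc 0 a ha y).2.1).2]),
            Real.exp_log (hap s hsT _ (projIcc 0 a ha y).2.1).1]
          rcases le_total y a with hya | hya
          · rw [projIcc_of_mem ha ⟨hy, hya⟩]
          · rw [projIcc_of_right_le ha hya, (hap s hsT y hy).2.2.2.1 hya,
              (hap s hsT a ha).2.2.2.1 le_rfl]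
        obtain ⟨-, h2, -⟩ := velocity_facts (g := g) (h := fun y => φ y s) hk hgk hka
          (continuous_profile ha l A (u s)) (fun y => Real.exp_pos _) hprof
        have h3 := (hap s hsT x x.2.1).2.2.2.2
        have h4 : ∫ z in Ioi (x:ℝ), gD g z / Phi φ z s = field ha l A hk (u s) x :=
          h2 x x.2.1
        rw [h4] at h3
        refine (h3.mono_of_mem_nhdsWithin (Ico_mem_nhdsGE_of_mem hsT)).congr_of_eventuallyEq ?_
          (hux s ⟨hs.1, hs.2.le⟩ x)
        filter_upwards [Icc_mem_nhdsGE_of_mem hs] with r hr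
        exact hux r hr x)
      t ⟨ht.1, le_rfl⟩
    intro x
    rw [hfin, hux t ⟨ht.1, le_rfl⟩]
  -- by continuity the truncation stays inactive slightly past `T`
  have hTS : T ∈ Icc 0 (T + 1) := ⟨hT.le, by linarith⟩
  obtain ⟨η, hη, hηw⟩ := Metric.continuousWithinAt_iff.1 (hw T hTS).continuousWithinAt
    (1/2) (by norm_num)
  obtain ⟨t₁, ht₁, ht₁'⟩ : ∃ t₁ ∈ Ico 0 T, dist t₁ T < η := by
    refine ⟨max 0 (T - η / 2), ⟨le_max_left _ _, max_lt hT (by linarith)⟩, ?_⟩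
    rw [dist_comm, Real.dist_eq, abs_of_nonneg (sub_nonneg.2 (max_le hT.le (by linarith)))]
    linarith [le_max_right 0 (T - η / 2)]
  have hδ : 0 < min (η / 2) 1 := lt_min (by linarith) one_pos
  set δ := min (η / 2) 1 with hδdef
  have hδ1 : δ ≤ 1 := min_le_right _ _
  have hδη : δ < η := lt_of_le_of_lt (min_le_left _ _) (by linarith)
  have hsub : Icc 0 (T + δ) ⊆ Icc 0 (T + 1) := Icc_subset_Icc_right (by linarith)
  have hwb : ∀ t ∈ Icc 0 (T + δ), ∀ x : Icc 0 a, l ≤ w t x ∧ w t x ≤ A := by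
    intro t ht x
    rcases lt_or_ge t T with htT | htT
    · have := hlogφ t ⟨ht.1, htT⟩ x x.2.1
      rw [hwφ t ⟨ht.1, htT⟩]
      constructor <;> linarith
    · have d1 := hηw (hsub ht) (by
        rw [Real.dist_eq, abs_of_nonneg (by linarith)]; linarith [ht.2])
      have d2 := hηw ⟨ht₁.1, by linarith [ht₁.2]⟩ ht₁'
      have d3 : dist (w t x) (w t₁ x) < 1 := by
        have := (ContinuousMap.dist_apply_le_dist (f := w t) (g := w t₁) x).trans
          (dist_triangle_right _ _ (w T))
        linarith
      have hb := hlogφ t₁ ht₁ x x.2.1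
      rw [← hwφ t₁ ht₁ x] at hb
      rw [Real.dist_eq, abs_lt] at d3
      constructor <;> linarith
  have hψ : ∀ t ∈ Icc 0 (T + δ), ∀ x ≥ (0:ℝ), Real.exp (W x t) = profile ha l A (w t) x := by
    intro t ht x hx
    have hb := hwb t ht (projIcc 0 a ha x)
    rw [hWw x hx t (hsub ht), profile, clampExt, trunc_of_mem hb.1 hb.2]
  refine ⟨δ, hδ, fun x t => Real.exp (W x t), ⟨hWC.exp.contDiffOn, ?_, ?_⟩, ?_, ?_⟩
  · intro x _
    simp only [hW0, Real.exp_log hε₀]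
  · intro x hx t ht
    obtain ⟨-, h2, -⟩ := velocity_facts (g := g) (h := fun y => Real.exp (W y t)) hk hgk hka
      (continuous_profile ha l A (w t)) (fun y => Real.exp_pos _) (hψ t ht)
    have h3 : ∫ z in Ioi x, gD g z / Phi (fun x t => Real.exp (W x t)) z t
        = ∫ z in x..a, dens ha l A k (w t) z := h2 x hx
    rw [h3]
    exact (hWd x t (hsub ht)).exp.hasDerivWithinAt
  · intro x hx t ht
    have hfar : ∀ y : Icc 0 a, Real.exp (w t y) = φ y t := fun y => by
      rw [hwφ t ht, Real.exp_log (hap t ht y y.2.1).1]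
    change Real.exp (W x t) = _
    rw [hWw x hx t ⟨ht.1, by linarith [ht.2]⟩, clampExt, hfar]
    rcases le_total x a with hxa | hxa
    · rw [projIcc_of_mem ha ⟨hx, hxa⟩]
    · rw [projIcc_of_right_le ha hxa, (hap t ht x hx).2.2.2.1 hxa, (hap t ht a ha).2.2.2.1 le_rfl]
  · exact ⟨Real.exp l, Real.exp_pos l, fun x hx t ht => (le_trunc _ _ _).trans_eq (hψ t ht x hx).symm⟩
end

section
/- Assume the bootstrap setup with parameters ε₀ ∈ (0,1), 0 < K₀ < K₁, β ∈ (0,1), κ > 1 satisfying ε₀ ≤ κ ε₀^{1/β}. Let φ ∈ C¹(ℝ⁺ × [0,T)) be a solution of the flow-map equation with data φ₀ ≡ ε₀ and g, with inf_{(x,t) ∈ ℝ⁺×[0,T']} φ(x,t) > 0 for every T' < T, and suppose the bootstrap property (B) holds on [0,T). Then, with ε(t) = φ(0,t), η(x,t) = φ(x,t)/ε(t), and l(t) = ε(t)^β, one has η(x,t) ≤ exp( ε₀² K₁ l(t) ∫_0^t ε(s)^{-1} ds ) for all x ∈ [0, l(t)] and t ∈ [0,T). -/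
/-! The bound comes from a comparison in time.
Subtracting the equations for `log φ(x,·)` and `log φ(0,·)` gives
`∂ₜ log η(x,t) = ∫_0^x -g'(z)/Φ(z,t) dz`.  Since `g' ≤ 0`, the right-hand side is nonnegative, and
`η(·,0) = 1`, so `η ≥ 1`, that is `φ(σ,t) ≥ ε(t)` (`le_of_sol`).  Hence `Φ(z,t) ≥ z ε(t)`, and the
bound `-g'(z) ≤ ε₀² K₁ z` turns the right-hand side into at most `ε₀² K₁ x / ε(t)` for `x ≤ 1`.
The range `x ≤ l(t)` lies in `[0,1]` because `ε` is nonincreasing and `ε₀ < 1`.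
Integrating in time gives the claim.  The splitting of the improper integral needs
`g'/Φ` to be integrable up to `0`, which is `integrableOn_quot`. -/

open Set MeasureTheory Filter Topology

/-- The constant `c_β = β(β+1)/((2β+1)(1−β))`. -/
noncomputable def cBeta (β : ℝ) : ℝ := β * (β + 1) / ((2 * β + 1) * (1 - β))

/-- The bootstrap setup: data `φ₀ ≡ ε₀ ∈ (0,1)`, `g ∈ C²(ℝ⁺)` compactly supported with
`g'(0) = 0`, `g' ≤ 0` on `ℝ⁺`, and constants `0 < K₀ < K₁` with
`ε₀² K₀ z ≤ −g'(z) ≤ ε₀² K₁ z` for `0 ≤ z ≤ 1`. -/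
def BootstrapData (ε₀ K₀ K₁ : ℝ) (g : ℝ → ℝ) : Prop :=
  ε₀ ∈ Set.Ioo (0:ℝ) 1 ∧ 0 < K₀ ∧ K₀ < K₁ ∧
  ContDiffOn ℝ 2 g (Set.Ici 0) ∧
  (∃ a : ℝ, ∀ z ≥ a, g z = 0) ∧
  gD g 0 = 0 ∧
  (∀ z ≥ (0:ℝ), gD g z ≤ 0) ∧
  (∀ z ∈ Set.Icc (0:ℝ) 1, ε₀ ^ 2 * K₀ * z ≤ -gD g z ∧ -gD g z ≤ ε₀ ^ 2 * K₁ * z)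

/-- The bootstrap property (B) on the time interval `I`:
`φ(x,t) ≤ κ ε(t)` for all `x ∈ [0, l(t)]`, `t ∈ I`, where `ε(t) = φ(0,t)`, `l(t) = ε(t)^β`. -/
def BootstrapB (φ : ℝ → ℝ → ℝ) (κ β : ℝ) (I : Set ℝ) : Prop :=
  ∀ t ∈ I, ∀ x ∈ Set.Icc (0:ℝ) ((φ 0 t) ^ β), φ x t ≤ κ * φ 0 t

/-! ### Integrability of `g'/Φ` at a fixed time -/

lemma mul_le_primitive {u : ℝ → ℝ} {m z : ℝ} (hu : ContinuousOn u (Set.Ici 0))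
    (hm : ∀ x ≥ (0:ℝ), m ≤ u x) (hz : 0 ≤ z) : m * z ≤ ∫ σ in (0:ℝ)..z, u σ := by
  have h1 : ∫ _ in (0:ℝ)..z, m = m * z := by simp [mul_comm]
  rw [← h1]
  refine intervalIntegral.integral_mono_on hz intervalIntegrable_const ?_ fun x hx => hm x hx.1
  apply ContinuousOn.intervalIntegrable
  rw [Set.uIcc_of_le hz]
  exact hu.mono fun x hx => hx.1

/-- The singularity of `1/Φ` at `0` is compensated by the linear vanishing of `g'` there. -/
lemma integrableOn_quot {u d : ℝ → ℝ} {m c a : ℝ} (hm0 : 0 < m)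
    (hu : ContinuousOn u (Set.Ici 0)) (hd : ContinuousOn d (Set.Ici 0))
    (hm : ∀ x ≥ (0:ℝ), m ≤ u x) (hc : ∀ z ∈ Set.Icc (0:ℝ) 1, |d z| ≤ c * z)
    (ha : ∀ z > a, 0 ≤ z → d z = 0) :
    IntegrableOn (fun z => d z / ∫ σ in (0:ℝ)..z, u σ) (Set.Ioi 0) := by
  have hpos : ∀ z > 0, 0 < ∫ σ in (0:ℝ)..z, u σ := fun z hz =>
    (mul_pos hm0 hz).trans_le (mul_le_primitive hu hm hz.le)
  have hP : ContinuousOn (fun z => ∫ σ in (0:ℝ)..z, u σ) (Set.Ioi 0) := by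
    intro z hz
    have hz' : (0:ℝ) < z := hz
    have h1 : ContinuousOn (fun z => ∫ σ in (0:ℝ)..z, u σ) (Set.Icc 0 (z+1)) := by
      have := intervalIntegral.continuousOn_primitive_interval (f := u) (a := 0) (b := z+1)
        (μ := volume) (by
          rw [Set.uIcc_of_le (by linarith)]
          exact (hu.mono fun x hx => hx.1).integrableOn_Icc)
      rwa [Set.uIcc_of_le (by linarith)] at this
    exact (h1.continuousAt (Icc_mem_nhds hz' (by linarith))).continuousWithinAt
  have hq : ContinuousOn (fun z => d z / ∫ σ in (0:ℝ)..z, u σ) (Set.Ioi 0) :=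
    (hd.mono Set.Ioi_subset_Ici_self).div hP fun z hz => (hpos z hz).ne'
  have i1 : IntegrableOn (fun z => d z / ∫ σ in (0:ℝ)..z, u σ) (Set.Ioc 0 1) := by
    have hC : IntegrableOn (fun _ : ℝ => c / m) (Set.Ioc 0 1) :=
      (continuousOn_const.integrableOn_Icc (a := (0:ℝ)) (b := 1)).mono_set
        Set.Ioc_subset_Icc_self
    refine hC.mono' ((hq.mono Set.Ioc_subset_Ioi_self).aestronglyMeasurable measurableSet_Ioc) ?_
    refine (ae_restrict_iff' measurableSet_Ioc).2 (Eventually.of_forall fun z hz => ?_)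
    have h0 := hpos z hz.1
    rw [Real.norm_eq_abs, abs_div, abs_of_pos h0, div_le_div_iff₀ h0 hm0]
    have h1 := hc z ⟨hz.1.le, hz.2⟩
    have h2 := mul_le_primitive hu hm hz.1.le
    have hc0 : 0 ≤ c := by
      have := (abs_nonneg _).trans h1
      exact nonneg_of_mul_nonneg_left this hz.1
    calc |d z| * m ≤ c * z * m := by gcongr
      _ = c * (m * z) := by ring
      _ ≤ _ := by gcongr
  have i2 : IntegrableOn (fun z => d z / ∫ σ in (0:ℝ)..z, u σ) (Set.Ioc 1 (max 1 a)) :=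
    ((hq.mono fun z hz => lt_of_lt_of_le one_pos hz.1).integrableOn_Icc).mono_set
      Set.Ioc_subset_Icc_self
  have i3 : IntegrableOn (fun z => d z / ∫ σ in (0:ℝ)..z, u σ) (Set.Ioi (max 1 a)) := by
    refine integrableOn_zero.congr_fun (fun z hz => ?_) measurableSet_Ioi
    have h1 : max 1 a < z := hz
    rw [max_lt_iff] at h1
    simp [ha z h1.2 (by linarith)]
  refine ((i1.union i2).union i3).mono_set fun z hz => ?_
  by_cases h1 : z ≤ 1
  · exact Or.inl (Or.inl ⟨hz, h1⟩)
  · by_cases h2 : z ≤ max 1 a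
    · exact Or.inl (Or.inr ⟨not_le.1 h1, h2⟩)
    · exact Or.inr (not_le.1 h2)

lemma gD_continuousOn {g : ℝ → ℝ} (hg : ContDiffOn ℝ 2 g (Set.Ici 0)) :
    ContinuousOn (gD g) (Set.Ici 0) :=
  hg.continuousOn_derivWithin (uniqueDiffOn_Ici 0) (by norm_num)

lemma gD_eq_zero {g : ℝ → ℝ} {a : ℝ} (ha : ∀ z ≥ a, g z = 0) :
    ∀ z > a, 0 ≤ z → gD g z = 0 := by
  intro z hz _
  have h : g =ᶠ[𝓝 z] fun _ => (0:ℝ) := by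
    filter_upwards [Ioi_mem_nhds hz] with y hy using ha y (le_of_lt hy)
  unfold gD
  rw [(h.filter_mono nhdsWithin_le_nhds).derivWithin_eq h.self_of_nhds]
  simp

/-! ### Comparison along a solution -/

section Solution

variable {ε₀ K₀ K₁ T : ℝ} {g : ℝ → ℝ} {φ : ℝ → ℝ → ℝ}

lemma slice_continuousOn (hsol : IsFlowMapSolution (fun _ => ε₀) g φ (Set.Ico 0 T))
    {t : ℝ} (ht : t ∈ Set.Ico (0:ℝ) T) : ContinuousOn (fun x => φ x t) (Set.Ici 0) :=
  hsol.1.continuousOn.comp (f := fun x : ℝ => (x, t)) (by fun_prop) fun _ hx => ⟨hx, ht⟩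

lemma time_continuousOn (hsol : IsFlowMapSolution (fun _ => ε₀) g φ (Set.Ico 0 T))
    {x : ℝ} (hx : 0 ≤ x) : ContinuousOn (fun t => φ x t) (Set.Ico 0 T) :=
  fun t ht => (hsol.2.2 x hx t ht).continuousWithinAt

lemma sol_pos (hinf : ∀ T' < T, PosInfOn φ (Set.Icc 0 T')) {t : ℝ} (ht : t ∈ Set.Ico (0:ℝ) T)
    {x : ℝ} (hx : 0 ≤ x) : 0 < φ x t := by
  obtain ⟨m, hm, h⟩ := hinf t ht.2
  exact hm.trans_le (h x hx t ⟨ht.1, le_rfl⟩)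

lemma sol_integrableOn (hB : BootstrapData ε₀ K₀ K₁ g)
    (hsol : IsFlowMapSolution (fun _ => ε₀) g φ (Set.Ico 0 T))
    (hinf : ∀ T' < T, PosInfOn φ (Set.Icc 0 T')) {t : ℝ} (ht : t ∈ Set.Ico (0:ℝ) T) :
    IntegrableOn (fun z => gD g z / Phi φ z t) (Set.Ioi 0) := by
  obtain ⟨_, _, _, hg, ⟨a, ha⟩, _, hneg, hK⟩ := hB
  obtain ⟨m, hm, h⟩ := hinf t ht.2
  refine integrableOn_quot (a := a) (c := ε₀ ^ 2 * K₁) hm (slice_continuousOn hsol ht)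
    (gD_continuousOn hg) (fun x hx => h x hx t ⟨ht.1, le_rfl⟩) (fun z hz => ?_) (gD_eq_zero ha)
  rw [abs_of_nonpos (hneg z hz.1)]
  exact (hK z hz).2

lemma Phi_pos (hsol : IsFlowMapSolution (fun _ => ε₀) g φ (Set.Ico 0 T))
    (hinf : ∀ T' < T, PosInfOn φ (Set.Icc 0 T')) {t : ℝ} (ht : t ∈ Set.Ico (0:ℝ) T)
    {z : ℝ} (hz : 0 < z) : 0 < Phi φ z t := by
  obtain ⟨m, hm, h⟩ := hinf t ht.2
  exact (mul_pos hm hz).trans_le (mul_le_primitive (slice_continuousOn hsol ht)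
    (fun x hx => h x hx t ⟨ht.1, le_rfl⟩) hz.le)

/-- The evolution of `log η`: the tails beyond `x` of the two integrals cancel. -/
lemma hasDerivAt_log_eta (hB : BootstrapData ε₀ K₀ K₁ g)
    (hsol : IsFlowMapSolution (fun _ => ε₀) g φ (Set.Ico 0 T))
    (hinf : ∀ T' < T, PosInfOn φ (Set.Icc 0 T')) {t : ℝ} (ht : t ∈ Set.Ioo (0:ℝ) T)
    {x : ℝ} (hx : 0 ≤ x) :
    HasDerivAt (fun s => Real.log (φ x s) - Real.log (φ 0 s))
      (∫ z in Set.Ioc 0 x, -gD g z / Phi φ z t) t := by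
  have ht' : t ∈ Set.Ico (0:ℝ) T := ⟨ht.1.le, ht.2⟩
  have key : ∀ y ≥ (0:ℝ), HasDerivAt (fun s => Real.log (φ y s))
      (∫ z in Set.Ioi y, gD g z / Phi φ z t) t := by
    intro y hy
    have hp := sol_pos hinf ht' hy
    have := ((hsol.2.2 y hy t ht').hasDerivAt (Ico_mem_nhds ht.1 ht.2)).log hp.ne'
    rwa [mul_div_cancel_left₀ _ hp.ne'] at this
  have hi := sol_integrableOn hB hsol hinf ht'
  have hs : Set.Ioi (0:ℝ) = Set.Ioc 0 x ∪ Set.Ioi x := (Set.Ioc_union_Ioi_eq_Ioi hx).symm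
  have hsplit : ∫ z in Set.Ioi 0, gD g z / Phi φ z t
      = (∫ z in Set.Ioc 0 x, gD g z / Phi φ z t) + ∫ z in Set.Ioi x, gD g z / Phi φ z t := by
    rw [hs]
    exact setIntegral_union (Set.Ioc_disjoint_Ioi le_rfl) measurableSet_Ioi
      (hi.mono_set Set.Ioc_subset_Ioi_self) (hi.mono_set (Set.Ioi_subset_Ioi hx))
  have hval : ∫ z in Set.Ioc 0 x, -gD g z / Phi φ z t
      = (∫ z in Set.Ioi x, gD g z / Phi φ z t) - ∫ z in Set.Ioi 0, gD g z / Phi φ z t := by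
    simp_rw [neg_div]
    rw [integral_neg, hsplit]
    ring
  rw [hval]
  exact (key x hx).sub (key 0 le_rfl)

lemma log_eta_continuousOn
    (hsol : IsFlowMapSolution (fun _ => ε₀) g φ (Set.Ico 0 T))
    (hinf : ∀ T' < T, PosInfOn φ (Set.Icc 0 T')) {x : ℝ} (hx : 0 ≤ x) :
    ContinuousOn (fun s => Real.log (φ x s) - Real.log (φ 0 s)) (Set.Ico 0 T) :=
  ((time_continuousOn hsol hx).log fun _ hs => (sol_pos hinf hs hx).ne').sub
    ((time_continuousOn hsol le_rfl).log fun _ hs => (sol_pos hinf hs le_rfl).ne')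

/-- `η ≥ 1`: the minimum of `φ(·,t)` is attained at `0`. -/
lemma le_of_sol (hB : BootstrapData ε₀ K₀ K₁ g)
    (hsol : IsFlowMapSolution (fun _ => ε₀) g φ (Set.Ico 0 T))
    (hinf : ∀ T' < T, PosInfOn φ (Set.Icc 0 T')) {t : ℝ} (ht : t ∈ Set.Ico (0:ℝ) T)
    {x : ℝ} (hx : 0 ≤ x) : φ 0 t ≤ φ x t := by
  have hmono : MonotoneOn (fun s => Real.log (φ x s) - Real.log (φ 0 s)) (Set.Ico 0 T) := by
    refine monotoneOn_of_deriv_nonneg (convex_Ico 0 T) (log_eta_continuousOn hsol hinf hx) ?_ ?_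
    · rw [interior_Ico]
      exact fun s hs =>
        (hasDerivAt_log_eta hB hsol hinf hs hx).differentiableAt.differentiableWithinAt
    · rw [interior_Ico]
      intro s hs
      rw [(hasDerivAt_log_eta hB hsol hinf hs hx).deriv]
      refine setIntegral_nonneg measurableSet_Ioc fun z hz => ?_
      exact div_nonneg (neg_nonneg.2 (hB.2.2.2.2.2.2.1 z hz.1.le))
        (Phi_pos hsol hinf ⟨hs.1.le, hs.2⟩ hz.1).le
  have h := hmono ⟨le_rfl, ht.1.trans_lt ht.2⟩ ht ht.1
  simp only [hsol.2.1 x hx, hsol.2.1 0 le_rfl, sub_self, sub_nonneg] at h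
  exact (Real.log_le_log_iff (sol_pos hinf ht le_rfl) (sol_pos hinf ht hx)).1 h

lemma eps_le (hB : BootstrapData ε₀ K₀ K₁ g)
    (hsol : IsFlowMapSolution (fun _ => ε₀) g φ (Set.Ico 0 T))
    (hinf : ∀ T' < T, PosInfOn φ (Set.Icc 0 T')) {t : ℝ} (ht : t ∈ Set.Ico (0:ℝ) T) :
    φ 0 t ≤ ε₀ := by
  have hd : ∀ s ∈ Set.Ioo (0:ℝ) T, HasDerivAt (fun s => φ 0 s)
      (φ 0 s * ∫ z in Set.Ioi 0, gD g z / Phi φ z s) s := fun s hs =>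
    (hsol.2.2 0 le_rfl s ⟨hs.1.le, hs.2⟩).hasDerivAt (Ico_mem_nhds hs.1 hs.2)
  have hanti : AntitoneOn (fun s => φ 0 s) (Set.Ico 0 T) := by
    refine antitoneOn_of_deriv_nonpos (convex_Ico 0 T) (time_continuousOn hsol le_rfl) ?_ ?_
    · rw [interior_Ico]
      exact fun s hs => (hd s hs).differentiableAt.differentiableWithinAt
    · rw [interior_Ico]
      intro s hs
      have hs' : s ∈ Set.Ico (0:ℝ) T := ⟨hs.1.le, hs.2⟩
      rw [(hd s hs).deriv]
      refine mul_nonpos_of_nonneg_of_nonpos (sol_pos hinf hs' le_rfl).le ?_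
      refine setIntegral_nonpos measurableSet_Ioi fun z hz => ?_
      have hz' : (0:ℝ) < z := hz
      exact div_nonpos_of_nonpos_of_nonneg (hB.2.2.2.2.2.2.1 z hz'.le)
        (Phi_pos hsol hinf hs' hz).le
  have h := hanti ⟨le_rfl, ht.1.trans_lt ht.2⟩ ht ht.1
  simpa only [hsol.2.1 0 le_rfl] using h

lemma rate_le (hB : BootstrapData ε₀ K₀ K₁ g)
    (hsol : IsFlowMapSolution (fun _ => ε₀) g φ (Set.Ico 0 T))
    (hinf : ∀ T' < T, PosInfOn φ (Set.Icc 0 T')) {t : ℝ} (ht : t ∈ Set.Ico (0:ℝ) T)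
    {x : ℝ} (hx : 0 ≤ x) (hx1 : x ≤ 1) :
    ∫ z in Set.Ioc 0 x, -gD g z / Phi φ z t ≤ ε₀ ^ 2 * K₁ * x * (φ 0 t)⁻¹ := by
  have hε := sol_pos hinf ht (le_refl (0:ℝ))
  have hi : IntegrableOn (fun z => -gD g z / Phi φ z t) (Set.Ioc 0 x) := by
    simp_rw [neg_div]
    exact ((sol_integrableOn hB hsol hinf ht).mono_set Set.Ioc_subset_Ioi_self).neg
  calc ∫ z in Set.Ioc 0 x, -gD g z / Phi φ z t
      ≤ ∫ _ in Set.Ioc 0 x, ε₀ ^ 2 * K₁ * (φ 0 t)⁻¹ := by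
        refine setIntegral_mono_on hi
          ((continuousOn_const.integrableOn_Icc (a := (0:ℝ)) (b := x)).mono_set
            Set.Ioc_subset_Icc_self) measurableSet_Ioc fun z hz => ?_
        have hK : 0 < K₁ := hB.2.1.trans hB.2.2.1
        have h1 := (hB.2.2.2.2.2.2.2 z ⟨hz.1.le, hz.2.trans hx1⟩).2
        have h2 : φ 0 t * z ≤ Phi φ z t := mul_le_primitive (slice_continuousOn hsol ht)
          (fun y hy => le_of_sol hB hsol hinf ht hy) hz.1.le
        rw [← div_eq_mul_inv, div_le_div_iff₀ (Phi_pos hsol hinf ht hz.1) hε]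
        calc -gD g z * φ 0 t ≤ ε₀ ^ 2 * K₁ * z * φ 0 t := by gcongr
          _ = ε₀ ^ 2 * K₁ * (φ 0 t * z) := by ring
          _ ≤ _ := by gcongr
    _ = _ := by
        simp [hx]
        ring

end Solution

/-- Lemma `lem:boundInnerZone`, first part: in the bootstrap setup, if the
bootstrap property (B) holds on `[0,T)`, then
`η(x,t) ≤ exp(ε₀² K₁ l(t) ∫_0^t ε(s)⁻¹ ds)` for `x ∈ [0, l(t)]`, `t ∈ [0,T)`,
where `ε(t) = φ(0,t)`, `η = φ/ε`, `l(t) = ε(t)^β`. -/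
theorem statement8 (ε₀ K₀ K₁ β κ T : ℝ) (g : ℝ → ℝ) (φ : ℝ → ℝ → ℝ)
    (hB : BootstrapData ε₀ K₀ K₁ g)
    (hβ : β ∈ Set.Ioo (0:ℝ) 1) (hκ : 1 < κ)
    (hcond : ε₀ ≤ κ * ε₀ ^ (1 / β))
    (hT : 0 < T)
    (hsol : IsFlowMapSolution (fun _ => ε₀) g φ (Set.Ico 0 T))
    (hinf : ∀ T' < T, PosInfOn φ (Set.Icc 0 T'))
    (hboot : BootstrapB φ κ β (Set.Ico 0 T)) :
    ∀ t ∈ Set.Ico (0:ℝ) T, ∀ x ∈ Set.Icc (0:ℝ) ((φ 0 t) ^ β),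
      φ x t / φ 0 t ≤
        Real.exp (ε₀ ^ 2 * K₁ * (φ 0 t) ^ β * ∫ s in (0:ℝ)..t, (φ 0 s)⁻¹) := by
  intro t ht x hx
  have hβ0 : 0 < β := hβ.1
  have hε : ∀ s ∈ Set.Ico (0:ℝ) T, 0 < φ 0 s := fun s hs => sol_pos hinf hs le_rfl
  have hx0 : 0 ≤ x := hx.1
  have hx1 : x ≤ 1 := hx.2.trans (Real.rpow_le_one (hε t ht).le
    ((eps_le hB hsol hinf ht).trans hB.1.2.le) hβ0.le)
  have hK : 0 < K₁ := hB.2.1.trans hB.2.2.1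
  have hsub : Set.Icc 0 t ⊆ Set.Ico 0 T := fun s hs => ⟨hs.1, hs.2.trans_lt ht.2⟩
  have hcinv : ContinuousOn (fun s => (φ 0 s)⁻¹) (Set.Ico 0 T) :=
    (time_continuousOn hsol le_rfl).inv₀ fun s hs => (hε s hs).ne'
  have hint : IntegrableOn (fun s => (φ 0 s)⁻¹) (Set.uIcc 0 t) := by
    rw [Set.uIcc_of_le ht.1]
    exact (hcinv.mono hsub).integrableOn_Icc
  have hprim : ContinuousOn (fun r => ∫ s in (0:ℝ)..r, (φ 0 s)⁻¹) (Set.Icc 0 t) := by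
    have := intervalIntegral.continuousOn_primitive_interval hint
    rwa [Set.uIcc_of_le ht.1] at this
  have hd : ∀ r ∈ Set.Ioo 0 t, HasDerivAt
      (fun r => Real.log (φ x r) - Real.log (φ 0 r)
        - ε₀ ^ 2 * K₁ * x * ∫ s in (0:ℝ)..r, (φ 0 s)⁻¹)
      ((∫ z in Set.Ioc 0 x, -gD g z / Phi φ z r) - ε₀ ^ 2 * K₁ * x * (φ 0 r)⁻¹) r := by
    intro r hr
    have hrT : r ∈ Set.Ioo 0 T := ⟨hr.1, hr.2.trans ht.2⟩
    refine (hasDerivAt_log_eta hB hsol hinf hrT hx0).sub (HasDerivAt.const_mul _ ?_)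
    refine intervalIntegral.integral_hasDerivAt_right ?_ ?_
      (hcinv.continuousAt (Ico_mem_nhds hrT.1 hrT.2))
    · apply ContinuousOn.intervalIntegrable
      rw [Set.uIcc_of_le hr.1.le]
      exact hcinv.mono fun s hs => ⟨hs.1, hs.2.trans_lt hrT.2⟩
    · exact (hcinv.mono Set.Ioo_subset_Ico_self).stronglyMeasurableAtFilter isOpen_Ioo r hrT
  have hanti : AntitoneOn (fun r => Real.log (φ x r) - Real.log (φ 0 r)
        - ε₀ ^ 2 * K₁ * x * ∫ s in (0:ℝ)..r, (φ 0 s)⁻¹) (Set.Icc 0 t) := by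
    refine antitoneOn_of_deriv_nonpos (convex_Icc 0 t)
      (((log_eta_continuousOn hsol hinf hx0).mono hsub).sub (hprim.const_mul _)) ?_ ?_
    · rw [interior_Icc]
      exact fun r hr => (hd r hr).differentiableAt.differentiableWithinAt
    · rw [interior_Icc]
      intro r hr
      rw [(hd r hr).deriv, sub_nonpos]
      exact rate_le hB hsol hinf ⟨hr.1.le, hr.2.trans ht.2⟩ hx0 hx1
  have h := hanti (Set.left_mem_Icc.2 ht.1) (Set.right_mem_Icc.2 ht.1) ht.1
  simp only [hsol.2.1 x hx0, hsol.2.1 0 le_rfl, sub_self, intervalIntegral.integral_same,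
    mul_zero] at h
  have hI : 0 ≤ ∫ s in (0:ℝ)..t, (φ 0 s)⁻¹ :=
    intervalIntegral.integral_nonneg ht.1 fun s hs => (inv_pos.2 (hε s (hsub hs))).le
  have hφ := sol_pos hinf ht hx0
  rw [← Real.log_le_iff_le_exp (div_pos hφ (hε t ht)), Real.log_div hφ.ne' (hε t ht).ne']
  calc Real.log (φ x t) - Real.log (φ 0 t)
      ≤ ε₀ ^ 2 * K₁ * x * ∫ s in (0:ℝ)..t, (φ 0 s)⁻¹ := by linarith
    _ ≤ _ := by
      have := hx.2
      gcongr
end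

section
/- Assume the bootstrap setup with parameters ε₀ ∈ (0,1), 0 < K₀ < K₁, β ∈ (0,1), κ > 1 satisfying ε₀ ≤ κ ε₀^{1/β}. Let φ ∈ C¹(ℝ⁺ × [0,T)) be a solution of the flow-map equation with data φ₀ ≡ ε₀ and g, with inf_{(x,t) ∈ ℝ⁺×[0,T']} φ(x,t) > 0 for every T' < T, and suppose the bootstrap property (B) holds on [0,T). Then φ(x,t) ≤ κ x^{1/β} for all x ≥ l(t) and all t ∈ [0,T), where l(t) = φ(0,t)^β. -/
/-! Since `g' ≤ 0` and `φ > 0`, the factor `∫_x^∞ g'/Φ` is nonpositive, so every `φ(x, ·)` is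
nonincreasing (`flow_antitoneOn`). Let `x ≥ l(t)`. If `x ≥ l(0)`, then
`φ(x,t) ≤ φ(x,0) = ε₀ ≤ x^{1/β}`. Otherwise `l` takes the value `x` at some `s ∈ [0,t]`, by the
intermediate value theorem, and property (B) at time `s` and the point `x = l(s)` gives
`φ(x,t) ≤ φ(x,s) ≤ κ ε(s) = κ x^{1/β}`. -/

open Set MeasureTheory Filter Topology

lemma flow_pos {φ : ℝ → ℝ → ℝ} {T : ℝ} (hinf : ∀ T' < T, PosInfOn φ (Set.Icc 0 T'))
    {x t : ℝ} (hx : 0 ≤ x) (ht : t ∈ Set.Ico (0:ℝ) T) : 0 < φ x t := by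
  obtain ⟨m, hm, h⟩ := hinf t ht.2
  exact hm.trans_le (h x hx t ⟨ht.1, le_rfl⟩)

/-- Each `φ(x, ·)` is nonincreasing in time. Only the sign of `∫_x^∞ g'/Φ` matters; integrability
is not needed, the junk value `0` of the integral being nonpositive as well. -/
lemma flow_antitoneOn {φ₀ g : ℝ → ℝ} {φ : ℝ → ℝ → ℝ} {T : ℝ}
    (hg : ∀ z ≥ (0:ℝ), gD g z ≤ 0)
    (hsol : IsFlowMapSolution φ₀ g φ (Set.Ico 0 T))
    (hinf : ∀ T' < T, PosInfOn φ (Set.Icc 0 T')) {x : ℝ} (hx : 0 ≤ x) :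
    AntitoneOn (fun s => φ x s) (Set.Ico 0 T) := by
  refine antitoneOn_of_hasDerivWithinAt_nonpos (convex_Ico 0 T)
    (fun t ht => (hsol.2.2 x hx t ht).continuousWithinAt)
    (fun t ht => (hsol.2.2 x hx t (interior_subset ht)).mono interior_subset) ?_
  intro t ht
  have ht' := interior_subset ht
  refine mul_nonpos_of_nonneg_of_nonpos (flow_pos hinf hx ht').le ?_
  refine setIntegral_nonpos measurableSet_Ioi fun z hz => ?_
  have hz0 : 0 ≤ z := hx.trans (le_of_lt hz)
  exact div_nonpos_of_nonpos_of_nonneg (hg z hz0)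
    (intervalIntegral.integral_nonneg hz0 fun σ hσ => (flow_pos hinf hσ.1 ht').le)

/-- Lemma `lem:boundInnerZone`, second part: in the bootstrap setup, if the
bootstrap property (B) holds on `[0,T)`, then `φ(x,t) ≤ κ x^{1/β}` for all `x ≥ l(t)`
and `t ∈ [0,T)`, where `l(t) = φ(0,t)^β`. -/
theorem statement9 (ε₀ K₀ K₁ β κ T : ℝ) (g : ℝ → ℝ) (φ : ℝ → ℝ → ℝ)
    (hB : BootstrapData ε₀ K₀ K₁ g)
    (hβ : β ∈ Set.Ioo (0:ℝ) 1) (hκ : 1 < κ)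
    (hcond : ε₀ ≤ κ * ε₀ ^ (1 / β))
    (hT : 0 < T)
    (hsol : IsFlowMapSolution (fun _ => ε₀) g φ (Set.Ico 0 T))
    (hinf : ∀ T' < T, PosInfOn φ (Set.Icc 0 T'))
    (hboot : BootstrapB φ κ β (Set.Ico 0 T)) :
    ∀ t ∈ Set.Ico (0:ℝ) T, ∀ x : ℝ, (φ 0 t) ^ β ≤ x →
      φ x t ≤ κ * x ^ (1 / β) := by
  obtain ⟨hβ0, -⟩ := hβ
  obtain ⟨⟨hε0, -⟩, -, -, -, -, -, hg, -⟩ := hB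
  intro t ht x hx
  have hinv : ∀ a : ℝ, 0 ≤ a → (a ^ β) ^ (1 / β) = a := fun a ha => by
    rw [← Real.rpow_mul ha, mul_one_div_cancel hβ0.ne', Real.rpow_one]
  have hx0 : 0 ≤ x := (Real.rpow_nonneg (flow_pos hinf le_rfl ht).le β).trans hx
  have hanti := flow_antitoneOn hg hsol hinf hx0
  have h0 : (0:ℝ) ∈ Set.Ico (0:ℝ) T := ⟨le_rfl, hT⟩
  rcases le_total (ε₀ ^ β) x with h | h
  · have h1 : φ x t ≤ ε₀ := (hanti h0 ht ht.1).trans_eq (hsol.2.1 x hx0)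
    have h2 : ε₀ ≤ x ^ (1 / β) := by
      rw [← hinv ε₀ hε0.le]
      exact Real.rpow_le_rpow (Real.rpow_nonneg hε0.le _) h (by positivity)
    nlinarith
  · have hsub : Set.Icc 0 t ⊆ Set.Ico 0 T := fun s hs => ⟨hs.1, hs.2.trans_lt ht.2⟩
    have hcont : ContinuousOn (fun s => φ 0 s ^ β) (Set.Icc 0 t) :=
      ContinuousOn.rpow_const
        (fun s hs => ((hsol.2.2 0 le_rfl s (hsub hs)).continuousWithinAt).mono hsub)
        fun s _ => Or.inr hβ0.le
    obtain ⟨s, hs, hsx⟩ := intermediate_value_Icc' ht.1 hcont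
      ⟨hx, by simpa only [hsol.2.1 0 le_rfl] using h⟩
    have hsx : φ 0 s ^ β = x := hsx
    have hs' := hsub hs
    calc φ x t ≤ φ x s := hanti hs' ht hs.2
      _ ≤ κ * φ 0 s := hboot s hs' x ⟨hx0, hsx.ge⟩
      _ = κ * x ^ (1 / β) := by rw [← hsx, hinv _ (flow_pos hinf le_rfl hs').le]
end
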